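/- (Singular invariance) Let λ ∈ Λ_I⁺ and β ∈ Ψ_λ⁺, and write λ' = λ|_{Φ_{β,2}}. Then there exists μ ∈ Λ_I⁺ with sgn(s_βλ, μ) ≠ 0 if and only if there exists μ' ∈ Λ⁺(Φ_I ∩ Φ_{β,2}, Φ_{β,2}) with sgn(s_βλ', μ', Φ_I ∩ Φ_{β,2}, Φ_{β,2}) ≠ 0. In particular, if sgn(s_βλ, μ) ≠ 0, then, writing μ = w s_βλ with w ∈ W_I and μ' = w' s_βλ' with w' ∈ W(Φ_I ∩ Φ_{β,2}), one has c(λ,μ) = (−1)^{ℓ(w)+ℓ(w')} c(λ', μ', Φ_I ∩ Φ_{β,2}, Φ_{β,2}). -/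

import Mathlib

open scoped RealInnerProductSpace
open Classical

noncomputable section

namespace JantzenGVM

variable {V : Type*} [NormedAddCommGroup V] [InnerProductSpace ℝ V] [FiniteDimensional ℝ V]

/-- The coroot `α^∨ = 2α/⟨α,α⟩` of a vector `α` (junk value `0` when `α = 0`). -/
def coroot (α : V) : V := (2 / ⟪α, α⟫) • α

/-- The linear functional `v ↦ ⟨v, α^∨⟩`. -/
def corootForm (α : V) : V →ₗ[ℝ] ℝ where
  toFun v := ⟪v, coroot α⟫
  map_add' x y := by simp [inner_add_left]
  map_smul' c x := by simp [inner_smul_left]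

lemma corootForm_self {α : V} (h : ⟪α, α⟫ ≠ 0) : corootForm α α = 2 := by
  simp only [corootForm, coroot, LinearMap.coe_mk, AddHom.coe_mk, real_inner_smul_right]
  field_simp

/-- The reflection `s_α` as a linear automorphism of `V` (the identity when `⟨α,α⟩ = 0`). -/
def reflV (α : V) : V ≃ₗ[ℝ] V :=
  if h : ⟪α, α⟫ = 0 then LinearEquiv.refl ℝ V
  else Module.reflection (corootForm_self h)

/-- `h* = ℂ ⊗ V`, realized as the space of real-linear functionals `V → ℂ` via the
inner product; an element `λ` pairs with a root `α` by `⟨λ, α⟩ = λ α` and with the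
coroot by `⟨λ, α^∨⟩ = λ (coroot α)`. -/
abbrev HStar (V : Type*) [NormedAddCommGroup V] [InnerProductSpace ℝ V] := V →ₗ[ℝ] ℂ

/-- The canonical embedding of `V` into `h*`. -/
def emb (α : V) : HStar V where
  toFun v := (⟪α, v⟫ : ℂ)
  map_add' x y := by simp [inner_add_right]
  map_smul' c x := by simp [inner_smul_right, Complex.real_smul]

/-- The action of a linear automorphism `w` of `V` on `h*`: `(w • λ)(v) = λ(w⁻¹ v)`. -/
def wAct (w : V ≃ₗ[ℝ] V) (l : HStar V) : HStar V := l ∘ₗ (w.symm : V →ₗ[ℝ] V)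

/-- The reflection `s_β λ = λ - ⟨λ, β^∨⟩ β` acting on `h*`. -/
def sRefl (β : V) (l : HStar V) : HStar V := l - l (coroot β) • emb β

/-- The group generated by the reflections in the elements of `Φ'`. -/
def weyl (Φ' : Set V) : Subgroup (V ≃ₗ[ℝ] V) :=
  Subgroup.closure {w | ∃ α ∈ Φ', w = reflV α}

/-- A finite, reduced, crystallographic root system spanning the Euclidean space `V`,
together with a choice of positive system and the corresponding simple system. -/
structure RootSys (V : Type*) [NormedAddCommGroup V] [InnerProductSpace ℝ V]
    [FiniteDimensional ℝ V] where
  Φ : Finset V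
  pos : Finset V
  Δ : Finset V
  ne_zero : ∀ α ∈ Φ, α ≠ (0 : V)
  span_eq_top : Submodule.span ℝ (Φ : Set V) = ⊤
  reduced : ∀ α ∈ Φ, ∀ c : ℝ, c • α ∈ Φ → c = 1 ∨ c = -1
  refl_mem : ∀ α ∈ Φ, ∀ β ∈ Φ, reflV α β ∈ Φ
  crystallographic : ∀ α ∈ Φ, ∀ β ∈ Φ, ∃ n : ℤ, ⟪β, coroot α⟫ = (n : ℝ)
  pos_subset : pos ⊆ Φ
  mem_pos_or : ∀ α ∈ Φ, α ∈ pos ∨ -α ∈ pos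
  not_both : ∀ α ∈ pos, -α ∉ pos
  simple_subset : Δ ⊆ pos
  simple_indep : LinearIndependent ℝ (fun x : {a : V // a ∈ Δ} => x.1)
  simple_gen : ∀ β ∈ pos, ∃ c : V → ℝ, (∀ α ∈ Δ, 0 ≤ c α) ∧ β = ∑ α ∈ Δ, c α • α

/-- A subsystem of the root system: a subset of `Φ` closed under its own reflections. -/
def IsSubsystem (S : RootSys V) (Φ' : Set V) : Prop :=
  Φ' ⊆ (S.Φ : Set V) ∧ ∀ α ∈ Φ', ∀ β ∈ Φ', reflV α β ∈ Φ'

/-- The length of `w`, i.e. the number of positive roots sent to negative roots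
(this equals the Coxeter length for elements of the Weyl group). -/
def len (S : RootSys V) (w : V ≃ₗ[ℝ] V) : ℕ :=
  {β ∈ (S.pos : Set V) | w β ∉ (S.pos : Set V)}.ncard

/-- `Φ_I = ℤI ∩ Φ`, the subsystem generated by a subset `I` of the simple roots. -/
def PhiI (S : RootSys V) (I : Finset V) : Set V :=
  {α ∈ (S.Φ : Set V) | α ∈ Submodule.span ℤ (I : Set V)}

/-- `z` is a positive integer. -/
def IsPosInt (z : ℂ) : Prop := ∃ n : ℤ, 0 < n ∧ z = (n : ℂ)

/-- `z` is an integer. -/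
def IsInt (z : ℂ) : Prop := ∃ n : ℤ, z = (n : ℂ)

/-- `Λ_I⁺ = {λ ∈ h* : ⟨λ, α^∨⟩ ∈ ℤ_{>0} for all α ∈ I}`. -/
def LambdaP (I : Set V) : Set (HStar V) :=
  {l | ∀ α ∈ I, IsPosInt (l (coroot α))}

/-- `Λ⁺(Φ'', Φ') = {ν ∈ ℂΦ' : ⟨ν, α^∨⟩ ∈ ℤ_{>0} for all α ∈ Φ'' ∩ Φ⁺}`. -/
def LambdaPSub (S : RootSys V) (Φ'' Φ' : Set V) : Set (HStar V) :=
  {l | l ∈ Submodule.span ℂ (emb '' Φ') ∧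
       ∀ α ∈ Φ'' ∩ (S.pos : Set V), IsPosInt (l (coroot α))}

/-- `λ` is `Φ''`-regular: `⟨λ, α⟩ ≠ 0` for all `α ∈ Φ''`. -/
def IsRegularOn (Φ'' : Set V) (l : HStar V) : Prop := ∀ α ∈ Φ'', l α ≠ 0

/-- `Ψ⁺(λ, Φ'', Φ') = {β ∈ (Φ' ∩ Φ⁺) \ Φ'' : ⟨λ, β^∨⟩ ∈ ℤ_{>0}}`. -/
def PsiP (S : RootSys V) (Φ'' Φ' : Set V) (l : HStar V) : Set V :=
  {β | β ∈ Φ' ∩ (S.pos : Set V) ∧ β ∉ Φ'' ∧ IsPosInt (l (coroot β))}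

/-- `Ψ⁺⁺(λ, Φ'', Φ') = {β ∈ Ψ⁺(λ, Φ'', Φ') : s_β λ is Φ''-regular}`. -/
def PsiPP (S : RootSys V) (Φ'' Φ' : Set V) (l : HStar V) : Set V :=
  {β ∈ PsiP S Φ'' Φ' l | ∀ α ∈ Φ'', (sRefl β l) α ≠ 0}

/-- The sign function: `sgn(λ, μ) = (-1)^{ℓ(w)}` if `λ, μ` are `Φ''`-regular and
`μ = wλ` for some `w ∈ W(Φ'')`, and `0` otherwise. -/
def sgnW (S : RootSys V) (Φ'' : Set V) (l m : HStar V) : ℤ :=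
  if h : IsRegularOn Φ'' l ∧ IsRegularOn Φ'' m ∧ ∃ w, w ∈ weyl Φ'' ∧ m = wAct w l
  then (-1) ^ len S h.2.2.choose else 0

/-- The Jantzen coefficient `c(λ, μ, Φ'', Φ') = Σ_{β ∈ Ψ⁺⁺(λ,Φ'',Φ')} sgn(s_β λ, μ)`. -/
def jc (S : RootSys V) (Φ'' Φ' : Set V) (l m : HStar V) : ℤ :=
  ∑ᶠ β ∈ PsiPP S Φ'' Φ' l, sgnW S Φ'' (sRefl β l) m

/-- The symmetrized Jantzen coefficient `c̃(λ, μ, Φ'', Φ')`. -/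
def jcSym (S : RootSys V) (Φ'' Φ' : Set V) (l m : HStar V) : ℤ :=
  jc S Φ'' Φ' l m + jc S Φ'' Φ' m l

/-- `θ(λ) = Σ_{w ∈ W_I} (-1)^{ℓ(w)} e^{wλ}` in the free `ℤ`-module on `h*`. -/
def theta (S : RootSys V) (I : Finset V) (l : HStar V) : HStar V →₀ ℤ :=
  ∑ᶠ w ∈ (weyl (PhiI S I) : Set (V ≃ₗ[ℝ] V)),
    Finsupp.single (wAct w l) ((-1) ^ len S w)

/-- `Φ_λ = {α ∈ Φ : ⟨λ, α⟩ = 0}`. -/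
def singSet (S : RootSys V) (l : HStar V) : Set V :=
  {α ∈ (S.Φ : Set V) | l α = 0}

/-- `Φ_{[λ]} = {α ∈ Φ : ⟨λ, α^∨⟩ ∈ ℤ}`. -/
def integralSet (S : RootSys V) (l : HStar V) : Set V :=
  {α ∈ (S.Φ : Set V) | IsInt (l (coroot α))}

/-- `(ℚ A) ∩ Φ`, the intersection of the rational span of `A` with `Φ`.
Taking `A = Φ_I ∪ {β}` gives `Φ_{β,1}`; taking `A = Φ_λ ∪ {β}` gives `Φ_{β,2}`. -/
def ratSpanRoots (S : RootSys V) (A : Set V) : Set V :=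
  {γ ∈ (S.Φ : Set V) | ∃ (t : Finset V) (c : V → ℚ),
    (t : Set V) ⊆ A ∧ γ = ∑ α ∈ t, (c α : ℝ) • α}

/-- `Φ_{β,0}`, the irreducible component of `Φ` containing `β`. -/
def component (S : RootSys V) (β : V) : Set V :=
  {γ ∈ (S.Φ : Set V) |
    Relation.ReflTransGen
      (fun x y => x ∈ (S.Φ : Set V) ∧ y ∈ (S.Φ : Set V) ∧ ⟪x, y⟫ ≠ 0) β γ}

/-- `λ|_{Φ'}`: the unique element of `ℂΦ'` with `⟨λ|_{Φ'}, α^∨⟩ = ⟨λ, α^∨⟩`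
for all `α ∈ Φ'`. -/
def restrictW (Φ' : Set V) (l : HStar V) : HStar V :=
  letI : Nonempty (HStar V) := ⟨0⟩
  Classical.epsilon fun m =>
    m ∈ Submodule.span ℂ (emb '' Φ') ∧ ∀ α ∈ Φ', m (coroot α) = l (coroot α)

/-- `ᴵWᴶ = {w ∈ W : ℓ(uwv) = ℓ(u) + ℓ(w) + ℓ(v) for all u ∈ W_I, v ∈ W_J}`. -/
def doubleCoset (S : RootSys V) (I J : Finset V) : Set (V ≃ₗ[ℝ] V) :=
  {w | w ∈ weyl (S.Φ : Set V) ∧ ∀ u ∈ weyl (PhiI S I), ∀ v ∈ weyl (PhiI S J),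
    len S (u * w * v) = len S u + len S w + len S v}

/-- The fundamental weight `ϖ_j` relative to an enumeration `e` of the simple roots:
the unique element of `h*` with `⟨ϖ_j, α_k^∨⟩ = δ_{jk}`. -/
def fundWeight {n : ℕ} (e : Fin n → V) (j : Fin n) : HStar V :=
  letI : Nonempty (HStar V) := ⟨0⟩
  Classical.epsilon fun m => ∀ k : Fin n, m (coroot (e k)) = if k = j then 1 else 0

/-- The labels of the irreducible Dynkin types. -/
inductive LieType | A | B | C | D | E | F | G
deriving DecidableEq

/-- The Cartan matrix of type `A_n` (1-based indices): entry `(i,j)` is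
`⟨α_i, α_j^∨⟩`. -/
def cartanA (i j : ℕ) : ℤ :=
  if i = j then 2 else if i + 1 = j ∨ j + 1 = i then -1 else 0

/-- The Cartan matrices of the irreducible types in the standard (Bourbaki/Humphreys)
numbering of the Dynkin diagram: `cartanEntry t n i j = ⟨α_i, α_j^∨⟩` (1-based). -/
def cartanEntry : LieType → ℕ → ℕ → ℕ → ℤ
  | .A, _, i, j => cartanA i j
  | .B, n, i, j => if i + 1 = n ∧ j = n then -2 else cartanA i j
  | .C, n, i, j => if i = n ∧ j + 1 = n then -2 else cartanA i j
  | .D, n, i, j =>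
      if i = j then 2
      else if (i + 2 = n ∧ j = n) ∨ (i = n ∧ j + 2 = n) then -1
      else if (i + 1 = n ∧ j = n) ∨ (i = n ∧ j + 1 = n) then 0
      else cartanA i j
  | .E, _, i, j =>
      if i = j then 2
      else if (i = 1 ∧ j = 3) ∨ (i = 3 ∧ j = 1) ∨ (i = 2 ∧ j = 4) ∨ (i = 4 ∧ j = 2) then -1
      else if (i = 1 ∧ j = 2) ∨ (i = 2 ∧ j = 1) ∨ (i = 2 ∧ j = 3) ∨ (i = 3 ∧ j = 2) then 0
      else cartanA i j
  | .F, _, i, j => if i = 2 ∧ j = 3 then -2 else cartanA i j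
  | .G, _, i, j => if i = 2 ∧ j = 1 then -3 else cartanA i j

/-- The standard basis vector `e_k` (1-based index, junk `0` outside `1 ≤ k ≤ n`). -/
def stdE (n k : ℕ) : EuclideanSpace ℝ (Fin n) :=
  if h : 1 ≤ k ∧ k ≤ n then EuclideanSpace.single ⟨k - 1, by omega⟩ 1 else 0

/-- The labels `B`, `C`, `D` of the classical non-`A` types. -/
inductive BCD | B | C | D
deriving DecidableEq

/-- The root set of `B_n` / `C_n` / `D_n` in the standard realization. -/
def bcdRoots (t : BCD) (n : ℕ) : Set (EuclideanSpace ℝ (Fin n)) :=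
  {v | (∃ i j : ℕ, 1 ≤ i ∧ i < j ∧ j ≤ n ∧
          (v = stdE n i - stdE n j ∨ v = -(stdE n i - stdE n j) ∨
           v = stdE n i + stdE n j ∨ v = -(stdE n i + stdE n j))) ∨
       (match t with
        | .B => ∃ i : ℕ, 1 ≤ i ∧ i ≤ n ∧ (v = stdE n i ∨ v = -stdE n i)
        | .C => ∃ i : ℕ, 1 ≤ i ∧ i ≤ n ∧ (v = (2:ℝ) • stdE n i ∨ v = -((2:ℝ) • stdE n i))
        | .D => False)}

/-- The positive roots of `B_n` / `C_n` / `D_n` in the standard realization. -/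
def bcdPos (t : BCD) (n : ℕ) : Set (EuclideanSpace ℝ (Fin n)) :=
  {v | (∃ i j : ℕ, 1 ≤ i ∧ i < j ∧ j ≤ n ∧
          (v = stdE n i - stdE n j ∨ v = stdE n i + stdE n j)) ∨
       (match t with
        | .B => ∃ i : ℕ, 1 ≤ i ∧ i ≤ n ∧ v = stdE n i
        | .C => ∃ i : ℕ, 1 ≤ i ∧ i ≤ n ∧ v = (2:ℝ) • stdE n i
        | .D => False)}

/-- The simple roots of `B_n` / `C_n` / `D_n` in the standard realization. -/
def bcdSimple (t : BCD) (n : ℕ) : Set (EuclideanSpace ℝ (Fin n)) :=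
  {v | (∃ i : ℕ, 1 ≤ i ∧ i < n ∧ v = stdE n i - stdE n (i + 1)) ∨
       (match t with
        | .B => v = stdE n n
        | .C => v = (2:ℝ) • stdE n n
        | .D => v = stdE n (n - 1) + stdE n n)}

/-- The simple root `α_k` of `B_n` / `C_n` / `D_n` (1-based index `k`). -/
def bcdAlpha (t : BCD) (n k : ℕ) : EuclideanSpace ℝ (Fin n) :=
  if k < n then stdE n k - stdE n (k + 1)
  else match t with
  | .B => stdE n n
  | .C => (2:ℝ) • stdE n n
  | .D => stdE n (n - 1) + stdE n n

/-!
Write `K` for the span of `I` and `U` for the span of `Φ_λ ∪ {β}`, so that `Φ_I = Φ ∩ K` and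
`Φ_{β,2} = Φ ∩ U`.

For an integral weight, having a dominant conjugate with nonzero sign means being regular. Since
`s_β` preserves `Φ_{β,2}`, every root killing `s_β λ` lies in `Φ_{β,2}`, and on `U` the weights `λ`
and `λ'` agree; so `s_β λ` is `Φ_I`-regular iff `s_β λ'` is `Φ_I ∩ Φ_{β,2}`-regular.

As `sgn(ν, w μ) = (-1)^{ℓ(w)} sgn(ν, μ)`, the coefficients only have to be compared for
`μ = s_β λ` and `μ' = s_β λ'`. If a root `γ ∉ Φ_I` contributes, then `s_β λ = w s_γ λ` with
`w ∈ W_I`, so `s_β w s_γ` stabilizes `λ`. Stabilizers are generated by reflections, so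
`s_β w s_γ ∈ W(Φ_λ) ⊆ W(Φ_{β,2})`, which forces `γ ∈ Φ_{β,2}` and
`w ∈ W_I ∩ W(Φ_{β,2}) = W(Φ_I ∩ Φ_{β,2})`. The two sums therefore agree term by term.
-/

/-! ### Reflections -/

section Coroot

variable {E : Type*} [NormedAddCommGroup E] [InnerProductSpace ℝ E]

lemma coroot_map {w : E ≃ₗ[ℝ] E} (hw : ∀ x y : E, ⟪w x, w y⟫ = ⟪x, y⟫) (α : E) :
    coroot (w α) = w (coroot α) := by
  simp only [coroot, hw, map_smul]

lemma eq_self_of_sub_mem {w : E ≃ₗ[ℝ] E} (hw : ∀ x y : E, ⟪w x, w y⟫ = ⟪x, y⟫)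
    {K : Submodule ℝ E} {x : E} (hx : x ∈ Kᗮ) (hwx : w x - x ∈ K) : w x = x := by
  have hort : ⟪w x, x⟫ = ⟪x, x⟫ := by
    rw [← sub_eq_zero, ← inner_sub_left, K.inner_right_of_mem_orthogonal hwx hx]
  rw [← sub_eq_zero, ← inner_self_eq_zero (𝕜 := ℝ), real_inner_sub_sub_self, hw, hort]
  ring

lemma apply_coroot_eq_zero_iff {α : E} (hα : α ≠ 0) (l : HStar E) :
    l (coroot α) = 0 ↔ l α = 0 := by
  simp [coroot, hα]

lemma re_apply_coroot_nonneg_iff {α : E} (hα : α ≠ 0) (l : HStar E) :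
    0 ≤ (l (coroot α)).re ↔ 0 ≤ (l α).re := by
  have hαα : 0 < 2 / ⟪α, α⟫ := div_pos two_pos (real_inner_self_pos.2 hα)
  rw [coroot, map_smul, Complex.smul_re, smul_eq_mul, mul_nonneg_iff_of_pos_left hαα]

end Coroot

lemma reflV_apply (α v : V) : reflV α v = v - ⟪v, coroot α⟫ • α := by
  unfold reflV
  split_ifs with h
  · simp [inner_self_eq_zero.1 h]
  · rfl

lemma reflV_eq_reflection (α : V) : reflV α = (ℝ ∙ α)ᗮ.reflection.toLinearEquiv := by
  ext v
  simp only [reflV_apply, coroot, LinearIsometryEquiv.coe_toLinearEquiv,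
    Submodule.reflection_orthogonal_apply, Submodule.reflection_singleton_apply, inner_smul_right,
    real_inner_self_eq_norm_sq, real_inner_comm v α, RCLike.ofReal_real_eq_id, id_eq]
  module

lemma reflV_self (α : V) : reflV α α = -α := by
  rw [reflV_eq_reflection]
  exact Submodule.reflection_orthogonalComplement_singleton_eq_neg α

lemma reflV_reflV (α v : V) : reflV α (reflV α v) = v := by
  rw [reflV_eq_reflection]
  exact Submodule.reflection_reflection _ v

lemma inner_reflV_reflV (α v w : V) : ⟪reflV α v, reflV α w⟫ = ⟪v, w⟫ := by
  rw [reflV_eq_reflection]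
  exact LinearIsometryEquiv.inner_map_map _ v w

lemma reflV_mul_self (α : V) : reflV α * reflV α = 1 :=
  LinearEquiv.ext (reflV_reflV α)

lemma reflV_inv (α : V) : (reflV α)⁻¹ = reflV α :=
  inv_eq_of_mul_eq_one_left (reflV_mul_self α)

lemma reflV_eq_self {α v : V} (h : ⟪v, α⟫ = 0) : reflV α v = v := by
  simp [reflV_apply, coroot, inner_smul_right, h]

lemma reflV_sub_mem {K : Submodule ℝ V} {α : V} (hα : α ∈ K) (v : V) : reflV α v - v ∈ K := by
  rw [reflV_apply, sub_sub_cancel_left]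
  exact K.neg_mem (K.smul_mem _ hα)

lemma reflV_map {w : V ≃ₗ[ℝ] V} (hw : ∀ x y : V, ⟪w x, w y⟫ = ⟪x, y⟫) (α : V) :
    reflV (w α) = w * reflV α * w⁻¹ := by
  rw [eq_mul_inv_iff_mul_eq]
  ext v
  simp only [LinearEquiv.mul_apply, reflV_apply, coroot_map hw, hw, map_sub, map_smul]

section Weyl

variable {A B : Set V} {w : V ≃ₗ[ℝ] V}

lemma weyl_mono (h : A ⊆ B) : weyl A ≤ weyl B :=
  Subgroup.closure_mono fun _ ⟨α, hα, hw⟩ ↦ ⟨α, h hα, hw⟩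

lemma reflV_mem_weyl {α : V} (h : α ∈ A) : reflV α ∈ weyl A :=
  Subgroup.subset_closure ⟨α, h, rfl⟩

lemma weyl_le_iff {H : Subgroup (V ≃ₗ[ℝ] V)} : weyl A ≤ H ↔ ∀ α ∈ A, reflV α ∈ H :=
  (Subgroup.closure_le H).trans ⟨fun h α hα ↦ h ⟨α, hα, rfl⟩, fun h _ ⟨α, hα, hw⟩ ↦ hw ▸ h α hα⟩

@[elab_as_elim]
lemma weyl_induction {p : ∀ w : V ≃ₗ[ℝ] V, w ∈ weyl A → Prop} (one : p 1 (one_mem _))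
    (mul_reflV : ∀ u (hu : u ∈ weyl A), ∀ α (hα : α ∈ A), p u hu →
      p (u * reflV α) (mul_mem hu (reflV_mem_weyl hα)))
    (hw : w ∈ weyl A) : p w hw := by
  unfold weyl at hw
  induction hw using Subgroup.closure_induction_right with
  | one => exact one
  | mul_right u hu _ h ih => obtain ⟨α, hα, rfl⟩ := h; exact mul_reflV u hu α hα ih
  | mul_inv_cancel u hu _ h ih =>
    obtain ⟨α, hα, rfl⟩ := h
    simpa only [reflV_inv] using mul_reflV u hu α hα ih

lemma inner_weyl (hw : w ∈ weyl A) : ∀ x y : V, ⟪w x, w y⟫ = ⟪x, y⟫ := by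
  induction hw using weyl_induction with
  | one => exact fun _ _ ↦ rfl
  | mul_reflV u _ α _ ih => exact fun x y ↦ (ih _ _).trans (inner_reflV_reflV α x y)

lemma weyl_apply_sub_mem {K : Submodule ℝ V} (hA : A ⊆ K) (hw : w ∈ weyl A) (x : V) :
    w x - x ∈ K := by
  induction hw using weyl_induction generalizing x with
  | one => simp
  | mul_reflV u _ α hα ih =>
    simpa using K.add_mem (ih (reflV α x)) (reflV_sub_mem (hA hα) x)

lemma weyl_apply_mem {K : Submodule ℝ V} (hA : A ⊆ K) (hw : w ∈ weyl A) {x : V} (hx : x ∈ K) :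
    w x ∈ K :=
  (K.sub_mem_iff_left hx).1 (weyl_apply_sub_mem hA hw x)

lemma weyl_mapsTo (h : ∀ α ∈ A, Set.MapsTo (reflV α) B B) (hw : w ∈ weyl A) :
    Set.MapsTo w B B := by
  induction hw using weyl_induction with
  | one => exact Set.mapsTo_id B
  | mul_reflV u _ α hα ih => exact ih.comp (h α hα)

end Weyl

/-! ### The action on `𝔥*` -/

section Action

variable {E : Type*} [NormedAddCommGroup E] [InnerProductSpace ℝ E]

lemma wAct_apply (w : E ≃ₗ[ℝ] E) (l : HStar E) (v : E) : wAct w l v = l (w⁻¹ v) := rfl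

lemma wAct_one (l : HStar E) : wAct 1 l = l := rfl

lemma wAct_mul (w u : E ≃ₗ[ℝ] E) (l : HStar E) : wAct (w * u) l = wAct w (wAct u l) := rfl

end Action

lemma sRefl_apply (β : V) (l : HStar V) (v : V) : sRefl β l v = l (reflV β v) := by
  simp only [sRefl, emb, coroot, reflV_apply, LinearMap.sub_apply, LinearMap.smul_apply, map_sub,
    map_smul, LinearMap.coe_mk, AddHom.coe_mk, smul_eq_mul, Complex.real_smul, inner_smul_right,
    real_inner_comm v β, Complex.ofReal_mul]
  ring

lemma sRefl_eq_wAct (β : V) (l : HStar V) : sRefl β l = wAct (reflV β) l := by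
  ext v
  rw [sRefl_apply, wAct_apply, reflV_inv]

/-! ### Root systems and simple roots -/

namespace RootSys

variable (S : RootSys V)

/-- The subsystem `Φ ∩ K` of roots lying in a subspace `K`. The subsystems `Φ_I`, `Φ_λ`, `Φ_{β,2}`
of the theorem are all of this form. -/
def rootsIn (K : Submodule ℝ V) : Set V := {α ∈ (S.Φ : Set V) | α ∈ K}

lemma rootsIn_subset (K : Submodule ℝ V) : S.rootsIn K ⊆ S.Φ := fun _ h ↦ h.1

lemma rootsIn_subset_coe (K : Submodule ℝ V) : S.rootsIn K ⊆ K := fun _ h ↦ h.2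

lemma rootsIn_mono {K U : Submodule ℝ V} (h : K ≤ U) : S.rootsIn K ⊆ S.rootsIn U :=
  fun _ hα ↦ ⟨hα.1, h hα.2⟩

lemma rootsIn_inf (K U : Submodule ℝ V) : S.rootsIn (K ⊓ U) = S.rootsIn K ∩ S.rootsIn U :=
  Set.ext fun _ ↦ and_and_left

variable {S} {α a b : V} {w : V ≃ₗ[ℝ] V}

lemma reflV_mem_rootsIn {K : Submodule ℝ V} (hα : α ∈ S.rootsIn K) :
    Set.MapsTo (reflV α) (S.rootsIn K) (S.rootsIn K) := fun β hβ ↦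
  ⟨S.refl_mem α hα.1 β hβ.1, (K.sub_mem_iff_left hβ.2).1 (reflV_sub_mem hα.2 β)⟩

lemma weyl_mapsTo_rootsIn {K : Submodule ℝ V} (hw : w ∈ weyl (S.rootsIn K)) :
    Set.MapsTo w (S.rootsIn K) (S.rootsIn K) :=
  weyl_mapsTo (fun _ hα ↦ reflV_mem_rootsIn hα) hw

lemma weyl_apply_mem_roots (hw : w ∈ weyl (S.Φ : Set V)) (hα : α ∈ S.Φ) : w α ∈ S.Φ :=
  weyl_mapsTo (B := (S.Φ : Set V)) (fun α hα β hβ ↦ S.refl_mem α hα β hβ) hw hα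

lemma neg_mem (hα : α ∈ S.Φ) : -α ∈ S.Φ := reflV_self α ▸ S.refl_mem α hα α hα

lemma neg_mem_pos (hα : α ∈ S.Φ) (h : α ∉ S.pos) : -α ∈ S.pos :=
  (S.mem_pos_or α hα).resolve_left h

lemma mem_roots_of_simple (ha : a ∈ S.Δ) : a ∈ S.Φ := S.pos_subset (S.simple_subset ha)

variable (S) in
lemma span_simple : Submodule.span ℝ (S.Δ : Set V) = ⊤ := by
  have hpos : ∀ β ∈ S.pos, β ∈ Submodule.span ℝ (S.Δ : Set V) := fun β hβ ↦ by
    obtain ⟨c, -, rfl⟩ := S.simple_gen β hβ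
    exact Submodule.sum_smul_mem _ _ fun a ha ↦ Submodule.subset_span ha
  rw [eq_top_iff, ← S.span_eq_top, Submodule.span_le]
  intro β hβ
  rcases S.mem_pos_or β hβ with h | h
  · exact hpos β h
  · exact (Submodule.neg_mem_iff _).1 (hpos _ h)

variable (S) in
/-- The simple roots as a basis of `V`. -/
def simpleBasis : Module.Basis {a : V // a ∈ S.Δ} ℝ V :=
  .mk S.simple_indep (by simpa using S.span_simple.ge)

@[simp]
lemma simpleBasis_apply (a : {a : V // a ∈ S.Δ}) : S.simpleBasis a = a := by simp [simpleBasis]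

lemma simpleBasis_repr_simple (a : {a : V // a ∈ S.Δ}) :
    S.simpleBasis.repr a = Finsupp.single a 1 := by
  rw [← S.simpleBasis.repr_self, simpleBasis_apply]

lemma simpleBasis_repr_nonneg (hb : b ∈ S.pos) (a : {a : V // a ∈ S.Δ}) :
    0 ≤ S.simpleBasis.repr b a := by
  obtain ⟨c, hc, rfl⟩ := S.simple_gen b hb
  rw [← Finset.sum_attach S.Δ (fun x ↦ c x • x), map_sum, Finsupp.finsetSum_apply]
  refine Finset.sum_nonneg fun x _ ↦ ?_
  rw [map_smul, simpleBasis_repr_simple, Finsupp.smul_single_one, Finsupp.single_apply]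
  split_ifs
  exacts [hc x x.2, le_rfl]

lemma reflV_simple_mem_pos (ha : a ∈ S.Δ) (hb : b ∈ S.pos) (hne : b ≠ a) :
    reflV a b ∈ S.pos := by
  by_contra hneg
  have hneg := neg_mem_pos (S.refl_mem a (mem_roots_of_simple ha) b (S.pos_subset hb)) hneg
  -- All coordinates of `b` away from `a` are unchanged by `s_a`, hence both `≥ 0` and `≤ 0`.
  have hsingle : S.simpleBasis.repr b = Finsupp.single ⟨a, ha⟩ (S.simpleBasis.repr b ⟨a, ha⟩) := by
    refine (Finsupp.eq_single_iff.2 ⟨fun x hx ↦ ?_, rfl⟩)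
    by_contra hxa
    have h := simpleBasis_repr_nonneg hneg x
    rw [reflV_apply, map_neg, map_sub, map_smul, simpleBasis_repr_simple ⟨a, ha⟩] at h
    simp only [Finsupp.neg_apply, Finsupp.sub_apply, Finsupp.smul_apply,
      Finsupp.single_eq_of_ne (by simpa using hxa), smul_zero, sub_zero] at h
    exact Finsupp.mem_support_iff.1 hx (by linarith [simpleBasis_repr_nonneg hb x])
  obtain ⟨c, hc, rfl⟩ : ∃ c : ℝ, 0 ≤ c ∧ b = c • a := ⟨_, simpleBasis_repr_nonneg hb ⟨a, ha⟩, by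
    rw [← S.simpleBasis.repr.injective.eq_iff, map_smul, simpleBasis_repr_simple ⟨a, ha⟩,
      Finsupp.smul_single_one, ← hsingle]⟩
  rcases S.reduced a (mem_roots_of_simple ha) c (S.pos_subset hb) with rfl | rfl
  · exact hne (one_smul ℝ a)
  · norm_num at hc

variable (S) in
lemma exists_inner_pos : ∃ δ : V, ∀ b ∈ S.pos, 0 < ⟪b, δ⟫ := by
  let height : V →ₗ[ℝ] ℝ := ∑ a, S.simpleBasis.coord a
  refine ⟨(InnerProductSpace.toDual ℝ V).symm (LinearMap.toContinuousLinearMap height),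
    fun b hb ↦ ?_⟩
  rw [real_inner_comm, InnerProductSpace.toDual_symm_apply]
  simp only [height, LinearMap.coe_toContinuousLinearMap', LinearMap.sum_apply,
    Module.Basis.coord_apply]
  have hnonneg := fun a (_ : a ∈ Finset.univ) ↦ simpleBasis_repr_nonneg hb a
  refine (Finset.sum_nonneg hnonneg).lt_of_ne' fun h0 ↦ S.ne_zero b (S.pos_subset hb) ?_
  rw [← S.simpleBasis.repr.map_eq_zero_iff]
  ext a
  exact (Finset.sum_eq_zero_iff_of_nonneg hnonneg).1 h0 a (Finset.mem_univ a)

lemma exists_inner_simple_pos {J : Set V} (hJ : J ⊆ S.Δ) (hb : b ∈ S.pos)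
    (hbJ : b ∈ Submodule.span ℝ J) : ∃ a ∈ J, 0 < ⟪b, a⟫ := by
  have hJ' : J = S.simpleBasis '' (Subtype.val ⁻¹' J) := by
    ext a
    simpa using fun h ↦ hJ h
  rw [hJ', Module.Basis.mem_span_image] at hbJ
  by_contra! hle
  have hterm : ∀ a, S.simpleBasis.repr b a * ⟪b, a.1⟫ ≤ 0 := fun a ↦ by
    by_cases ha : S.simpleBasis.repr b a = 0
    · simp [ha]
    · exact mul_nonpos_of_nonneg_of_nonpos (simpleBasis_repr_nonneg hb a)
        (hle a (hbJ (Finsupp.mem_support_iff.2 ha)))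
  have hsum : ⟪b, b⟫ = ∑ a, S.simpleBasis.repr b a * ⟪b, a.1⟫ := by
    conv_lhs => rw [← S.simpleBasis.sum_repr b, inner_sum, S.simpleBasis.sum_repr b]
    simp [inner_smul_right]
  exact (real_inner_self_pos.2 (S.ne_zero b (S.pos_subset hb))).not_ge
    (hsum ▸ Finset.sum_nonpos fun a _ ↦ hterm a)

/-- In the `W_J`-orbit of `α`, a positive root of least height is simple: otherwise a simple
reflection would lower it further. -/
lemma exists_weyl_apply_simple {J : Set V} (hJ : J ⊆ S.Δ)
    (hα : α ∈ S.rootsIn (Submodule.span ℝ J)) : ∃ w ∈ weyl J, ∃ a ∈ J, α = w a := by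
  obtain ⟨δ, hδ⟩ := S.exists_inner_pos
  wlog hpos : α ∈ S.pos generalizing α
  · obtain ⟨w, hw, a, ha, h⟩ := this ⟨neg_mem hα.1, (Submodule.neg_mem_iff _).2 hα.2⟩
      (neg_mem_pos hα.1 hpos)
    refine ⟨w * reflV a, mul_mem hw (reflV_mem_weyl ha), a, ha, ?_⟩
    rw [LinearEquiv.mul_apply, reflV_self, map_neg, ← h, neg_neg]
  let orbit := S.pos.filter fun b ↦ ∃ w ∈ weyl J, α = w b
  obtain ⟨b, hb, hmin⟩ := orbit.exists_min_image (fun b ↦ ⟪b, δ⟫)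
    ⟨α, Finset.mem_filter.2 ⟨hpos, 1, one_mem _, rfl⟩⟩
  obtain ⟨hbpos, w, hw, rfl⟩ := Finset.mem_filter.1 hb
  have hbJ : b ∈ Submodule.span ℝ J := by
    simpa using weyl_apply_mem Submodule.subset_span (inv_mem hw) hα.2
  obtain ⟨a, haJ, hba⟩ := exists_inner_simple_pos hJ hbpos hbJ
  suffices b = a from ⟨w, hw, a, haJ, this ▸ rfl⟩
  by_contra hne
  have hlow := hmin (reflV a b) (Finset.mem_filter.2 ⟨reflV_simple_mem_pos (hJ haJ) hbpos hne,
    w * reflV a, mul_mem hw (reflV_mem_weyl haJ), by rw [LinearEquiv.mul_apply, reflV_reflV]⟩)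
  have haa : 0 < ⟪a, a⟫ := real_inner_self_pos.2 (S.ne_zero a (mem_roots_of_simple (hJ haJ)))
  have hlt : 0 < 2 / ⟪a, a⟫ * ⟪b, a⟫ * ⟪a, δ⟫ :=
    mul_pos (by positivity) (hδ a (S.simple_subset (hJ haJ)))
  rw [reflV_apply, inner_sub_left, inner_smul_left, coroot, inner_smul_right] at hlow
  simp only [conj_trivial] at hlow
  linarith

lemma weyl_rootsIn_span_simple {J : Set V} (hJ : J ⊆ S.Δ) :
    weyl (S.rootsIn (Submodule.span ℝ J)) = weyl J := by
  refine le_antisymm (weyl_le_iff.2 fun α hα ↦ ?_)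
    (weyl_mono fun a ha ↦ ⟨mem_roots_of_simple (hJ ha), Submodule.subset_span ha⟩)
  obtain ⟨w, hw, a, ha, rfl⟩ := exists_weyl_apply_simple hJ hα
  rw [reflV_map (inner_weyl hw)]
  exact mul_mem (mul_mem hw (reflV_mem_weyl ha)) (inv_mem hw)

variable (S) in
lemma rootsIn_top : S.rootsIn ⊤ = S.Φ := by simp [rootsIn]

variable (S) in
lemma weyl_roots : weyl (S.Φ : Set V) = weyl (S.Δ : Set V) := by
  rw [← weyl_rootsIn_span_simple subset_rfl, S.span_simple, S.rootsIn_top]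

lemma rootsIn_span_subset {J B : Set V} (hJ : J ⊆ S.Δ) (hJB : J ⊆ B)
    (hB : ∀ α ∈ B, Set.MapsTo (reflV α) B B) : S.rootsIn (Submodule.span ℝ J) ⊆ B := by
  intro α hα
  obtain ⟨w, hw, a, ha, rfl⟩ := exists_weyl_apply_simple hJ hα
  exact weyl_mapsTo (fun a ha ↦ hB a (hJB ha)) hw (hJB ha)

end RootSys

/-! ### The parity of the length -/

lemma det_reflV {α : V} (hα : α ≠ 0) : LinearMap.det (reflV α : V →ₗ[ℝ] V) = -1 := by
  rw [reflV_eq_reflection, Submodule.det_reflection, Submodule.orthogonal_orthogonal,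
    finrank_span_singleton hα, pow_one]

namespace RootSys

variable {S : RootSys V} {a : V} {w u : V ≃ₗ[ℝ] V}

lemma len_mul_reflV (ha : a ∈ S.Δ) (hwa : w a ∈ S.pos) :
    len S (w * reflV a) = len S w + 1 := by
  have hinv : {β ∈ (S.pos : Set V) | (w * reflV a) β ∉ (S.pos : Set V)} =
      insert a (reflV a '' {β ∈ (S.pos : Set V) | w β ∉ (S.pos : Set V)}) := by
    ext β
    simp only [LinearEquiv.mul_apply, Set.mem_insert_iff, Set.mem_image, Set.mem_ofPred_eq,
      Finset.mem_coe]
    constructor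
    · rintro ⟨hβ, hwβ⟩
      refine or_iff_not_imp_left.2 fun hne ↦ ⟨reflV a β, ⟨?_, hwβ⟩, reflV_reflV a β⟩
      exact reflV_simple_mem_pos ha hβ hne
    · rintro (rfl | ⟨γ, ⟨hγ, hwγ⟩, rfl⟩)
      · rw [reflV_self, map_neg]
        exact ⟨S.simple_subset ha, S.not_both _ hwa⟩
      · rw [reflV_reflV]
        exact ⟨reflV_simple_mem_pos ha hγ (by rintro rfl; exact hwγ hwa), hwγ⟩
  have hmem : a ∉ reflV a '' {β ∈ (S.pos : Set V) | w β ∉ (S.pos : Set V)} := by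
    rintro ⟨β, ⟨hβ, -⟩, h⟩
    have hβa : β = -a := by rw [← reflV_reflV a β, h, reflV_self]
    exact S.not_both a (S.simple_subset ha) (hβa ▸ hβ)
  rw [len, hinv, Set.ncard_insert_of_notMem hmem
    ((S.pos.finite_toSet.subset (Set.sep_subset _ _)).image _),
    Set.ncard_image_of_injective _ (reflV a).injective, len]

lemma neg_one_pow_len_eq_det (hw : w ∈ weyl (S.Φ : Set V)) :
    (-1 : ℝ) ^ len S w = LinearMap.det (w : V →ₗ[ℝ] V) := by
  rw [S.weyl_roots] at hw
  induction hw using weyl_induction with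
  | one => simp [len]
  | mul_reflV w hw a ha ih =>
    have hdet : LinearMap.det ((w * reflV a : V ≃ₗ[ℝ] V) : V →ₗ[ℝ] V) =
        -LinearMap.det (w : V →ₗ[ℝ] V) := by
      rw [← mul_neg_one, ← det_reflV (S.ne_zero a (mem_roots_of_simple ha)), ← map_mul]
      rfl
    rw [hdet, ← ih]
    by_cases hwa : w a ∈ S.pos
    · rw [len_mul_reflV ha hwa, pow_succ, mul_neg_one]
    · have hwa' : (w * reflV a) a ∈ S.pos := by
        rw [LinearEquiv.mul_apply, reflV_self, map_neg]
        exact neg_mem_pos (weyl_apply_mem_roots (S.weyl_roots ▸ hw) (mem_roots_of_simple ha)) hwa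
      have hlen := len_mul_reflV ha hwa'
      rw [mul_assoc, reflV_mul_self, mul_one] at hlen
      rw [hlen, pow_succ, mul_neg_one, neg_neg]

lemma neg_one_pow_len_mul (hw : w ∈ weyl (S.Φ : Set V)) (hu : u ∈ weyl (S.Φ : Set V)) :
    (-1 : ℤ) ^ len S (w * u) = (-1) ^ len S w * (-1) ^ len S u := by
  have h : (-1 : ℝ) ^ len S (w * u) = (-1) ^ len S w * (-1) ^ len S u := by
    rw [neg_one_pow_len_eq_det hw, neg_one_pow_len_eq_det hu,
      neg_one_pow_len_eq_det (mul_mem hw hu), ← map_mul]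
    rfl
  exact_mod_cast h

end RootSys

/-! ### Stabilizers -/

lemma conj_mem_weyl {A B : Set V} {g w : V ≃ₗ[ℝ] V} (hg : ∀ x y : V, ⟪g x, g y⟫ = ⟪x, y⟫)
    (hAB : Set.MapsTo g A B) (hw : w ∈ weyl A) : g * w * g⁻¹ ∈ weyl B := by
  have hle : weyl A ≤ (weyl B).comap (MulAut.conj g).toMonoidHom :=
    weyl_le_iff.2 fun α hα ↦ by
      simpa [← reflV_map hg] using reflV_mem_weyl (hAB hα)
  exact hle hw

namespace RootSys

variable {S : RootSys V} {w : V ≃ₗ[ℝ] V}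

section Exchange

open scoped Pointwise

lemma simple_reflections_pow_subset (n : ℕ) :
    (reflV '' (S.Δ : Set V)) ^ n ⊆ weyl (S.Δ : Set V) :=
  Subgroup.pow_subset (Set.image_subset_iff.2 fun _ ↦ reflV_mem_weyl)

lemma exists_mem_simple_reflections_pow (hw : w ∈ weyl (S.Φ : Set V)) :
    ∃ n : ℕ, w ∈ (reflV '' (S.Δ : Set V)) ^ n := by
  rw [S.weyl_roots] at hw
  induction hw using weyl_induction with
  | one => exact ⟨0, Set.mem_one.2 rfl⟩
  | mul_reflV u _ a ha ih =>
    obtain ⟨n, hu⟩ := ih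
    exact ⟨n + 1, pow_succ (reflV '' (S.Δ : Set V)) n ▸ Set.mul_mem_mul hu ⟨a, ha, rfl⟩⟩

/-- The exchange condition: in a product of simple reflections sending the simple root `a` to a
negative root, one of the factors can be traded for `s_a`. -/
lemma mul_reflV_mem_simple_reflections_pow {a : V} (ha : a ∈ S.Δ) {n : ℕ}
    (hw : w ∈ (reflV '' (S.Δ : Set V)) ^ n) (hwa : w a ∉ S.pos) :
    ∃ m, n = m + 1 ∧ w * reflV a ∈ (reflV '' (S.Δ : Set V)) ^ m := by
  induction n generalizing w with
  | zero =>
    rw [pow_zero, Set.mem_one] at hw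
    exact absurd (S.simple_subset ha) (by simpa [hw] using hwa)
  | succ n ih =>
    refine ⟨n, rfl, ?_⟩
    rw [pow_succ'] at hw
    obtain ⟨-, ⟨b, hb, rfl⟩, u, hu, rfl⟩ := Set.mem_mul.1 hw
    by_cases hua : u a ∈ S.pos
    · have hub : u a = b := by
        by_contra hne
        exact hwa (reflV_simple_mem_pos hb hua hne)
      have hcancel : reflV b * u * reflV a = u := by
        rw [← hub, reflV_map (inner_weyl (simple_reflections_pow_subset n hu)),
          inv_mul_cancel_right, mul_assoc, reflV_mul_self, mul_one]
      rwa [hcancel]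
    · obtain ⟨m, rfl, hm⟩ := ih hu hua
      rw [pow_succ', mul_assoc]
      exact Set.mul_mem_mul ⟨b, hb, rfl⟩ hm

lemma mem_weyl_orthogonal_of_dominant {x : V} (hdom : ∀ b ∈ S.pos, 0 ≤ ⟪x, b⟫)
    (hw : w ∈ weyl (S.Φ : Set V)) (hwx : w x = x) : w ∈ weyl (S.rootsIn (ℝ ∙ x)ᗮ) := by
  obtain ⟨n, hn⟩ := exists_mem_simple_reflections_pow hw
  clear hw
  induction n using Nat.strong_induction_on generalizing w with
  | _ n ih =>
  obtain _ | n := n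
  · rw [Set.mem_one.1 hn]
    exact one_mem _
  obtain ⟨u, hu, -, ⟨a, ha, rfl⟩, rfl⟩ := Set.mem_mul.1 (pow_succ (reflV '' (S.Δ : Set V)) n ▸ hn)
  by_cases hua : u a ∈ S.pos
  · have hneg : ⟪x, a⟫ = -⟪x, u a⟫ := by
      conv_rhs => rw [← hwx]
      rw [LinearEquiv.mul_apply, inner_weyl (simple_reflections_pow_subset n hu),
        ← inner_reflV_reflV a (reflV a x), reflV_reflV, reflV_self,
        inner_neg_right, neg_neg]
    have hxa : ⟪x, a⟫ = 0 := by linarith [hdom _ hua, hdom a (S.simple_subset ha)]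
    have hux : u x = x := by rwa [LinearEquiv.mul_apply, reflV_eq_self hxa] at hwx
    exact mul_mem (ih n n.lt_succ_self hux hu) (reflV_mem_weyl
      ⟨mem_roots_of_simple ha, Submodule.mem_orthogonal_singleton_iff_inner_right.2 hxa⟩)
  · obtain ⟨m, rfl, hm⟩ := mul_reflV_mem_simple_reflections_pow ha hu hua
    exact ih m (by lia) hwx hm

end Exchange

variable (S) in
lemma finite_weyl : (weyl (S.Φ : Set V) : Set (V ≃ₗ[ℝ] V)).Finite := by
  let restrict : weyl (S.Φ : Set V) → S.Φ → S.Φ :=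
    fun w α ↦ ⟨w.1 α, weyl_apply_mem_roots w.2 α.2⟩
  suffices Function.Injective restrict from @Set.toFinite _ _ (Finite.of_injective restrict this)
  refine fun w u h ↦ Subtype.ext ?_
  refine LinearEquiv.toLinearMap_injective (LinearMap.ext_on S.span_eq_top fun α hα ↦ ?_)
  exact congrArg Subtype.val (congrFun h ⟨α, hα⟩)

/-- Maximizing the pairing with a strictly dominant vector over the group yields dominance. -/
lemma exists_wAct_dominant {A : Set V} (hA : A ⊆ S.Φ) (l : HStar V) :
    ∃ g ∈ weyl A, ∀ α ∈ A ∩ (S.pos : Set V), 0 ≤ (wAct g l α).re := by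
  obtain ⟨δ, hδ⟩ := S.exists_inner_pos
  obtain ⟨g, hg, hmax⟩ := Set.exists_max_image _ (fun g ↦ (wAct g l δ).re)
    (S.finite_weyl.subset (weyl_mono hA)) ⟨1, one_mem _⟩
  refine ⟨g, hg, fun α ⟨hα, hpos⟩ ↦ ?_⟩
  have hle : (sRefl α (wAct g l) δ).re ≤ (wAct g l δ).re := by
    rw [sRefl_eq_wAct, ← wAct_mul]
    exact hmax _ (mul_mem (reflV_mem_weyl hα) hg)
  have hprod : 0 ≤ (wAct g l (coroot α)).re * ⟪α, δ⟫ := by simpa [sRefl, emb] using hle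
  exact (re_apply_coroot_nonneg_iff (S.ne_zero α (hA hα)) _).1
    (nonneg_of_mul_nonneg_left hprod (hδ α hpos))

lemma mem_weyl_orthogonal {x : V} (hw : w ∈ weyl (S.Φ : Set V)) (hwx : w x = x) :
    w ∈ weyl (S.rootsIn (ℝ ∙ x)ᗮ) := by
  obtain ⟨g, hg, hdom⟩ := exists_wAct_dominant (S := S) subset_rfl (emb x)
  have hdom' : ∀ b ∈ S.pos, 0 ≤ ⟪g x, b⟫ := fun b hb ↦ by
    have h : (wAct g (emb x) b).re = ⟪g x, b⟫ := by
      rw [← inner_weyl (inv_mem hg)]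
      simp [wAct_apply, emb]
    exact h ▸ hdom b ⟨S.pos_subset hb, hb⟩
  have hconj := mem_weyl_orthogonal_of_dominant hdom' (mul_mem (mul_mem hg hw) (inv_mem hg))
    (by simp [hwx])
  have hmaps : Set.MapsTo (g⁻¹ : V ≃ₗ[ℝ] V) (S.rootsIn (ℝ ∙ g x)ᗮ) (S.rootsIn (ℝ ∙ x)ᗮ) := by
    intro α hα
    refine ⟨weyl_apply_mem_roots (inv_mem hg) hα.1, ?_⟩
    rw [Submodule.mem_orthogonal_singleton_iff_inner_right, ← inner_weyl hg]
    simpa using Submodule.mem_orthogonal_singleton_iff_inner_right.1 hα.2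
  simpa [mul_assoc] using conj_mem_weyl (inner_weyl (inv_mem hg)) hmaps hconj

/-- A generic vector `x` of `Kᗮ` is orthogonal to no root outside `K`, and it is fixed by `w` as
soon as `w` is the identity modulo `K`. -/
lemma mem_weyl_rootsIn_iff {K : Submodule ℝ V} :
    w ∈ weyl (S.rootsIn K) ↔ w ∈ weyl (S.Φ : Set V) ∧ ∀ x, w x - x ∈ K := by
  refine ⟨fun hw ↦ ⟨weyl_mono (S.rootsIn_subset K) hw,
    weyl_apply_sub_mem (S.rootsIn_subset_coe K) hw⟩, fun ⟨hw, hsub⟩ ↦ ?_⟩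
  obtain ⟨x, hxK, hx⟩ := Module.Dual.exists_forall_mem_ne_zero_of_forall_exists
    (Submodule.orthogonal K)
    (fun α : {α // α ∈ S.Φ.filter (· ∉ K)} ↦ innerₗ V α.1) fun ⟨α, hα⟩ ↦ by
      by_contra! h
      refine (Finset.mem_filter.1 hα).2 (K.orthogonal_orthogonal ▸ ?_)
      exact (Submodule.mem_orthogonal' _ _).2 h
  suffices h : S.rootsIn (ℝ ∙ x)ᗮ ⊆ S.rootsIn K from
    weyl_mono h (mem_weyl_orthogonal hw (eq_self_of_sub_mem (inner_weyl hw) hxK (hsub x)))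
  refine fun α hα ↦ ⟨hα.1, ?_⟩
  by_contra hαK
  exact hx ⟨α, Finset.mem_filter.2 ⟨hα.1, hαK⟩⟩
    (Submodule.mem_orthogonal_singleton_iff_inner_left.1 hα.2)

variable {K U : Submodule ℝ V} {l m : HStar V}

lemma weyl_rootsIn_inf (K U : Submodule ℝ V) :
    weyl (S.rootsIn (K ⊓ U)) = weyl (S.rootsIn K) ⊓ weyl (S.rootsIn U) := by
  ext w
  simp only [mem_weyl_rootsIn_iff, Subgroup.mem_inf, Submodule.mem_inf, forall_and]
  tauto

lemma mem_weyl_ker_of_wAct_eq (hw : w ∈ weyl (S.Φ : Set V)) (hwl : wAct w l = l) :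
    w ∈ weyl (S.rootsIn (LinearMap.ker l)) := by
  refine mem_weyl_rootsIn_iff.2 ⟨hw, fun x ↦ ?_⟩
  rw [LinearMap.mem_ker, map_sub, sub_eq_zero]
  simpa [wAct_apply] using (LinearMap.congr_fun hwl (w x)).symm

lemma eq_one_of_wAct_eq (hl : IsRegularOn (S.rootsIn K) l) (hw : w ∈ weyl (S.rootsIn K))
    (hwl : wAct w l = l) : w = 1 := by
  have hempty : S.rootsIn (K ⊓ LinearMap.ker l) ⊆ ∅ := fun α hα ↦ hl α ⟨hα.1, hα.2.1⟩ hα.2.2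
  have hmem : w ∈ weyl (S.rootsIn (K ⊓ LinearMap.ker l)) := weyl_rootsIn_inf K _ ▸
    ⟨hw, mem_weyl_ker_of_wAct_eq (weyl_mono (S.rootsIn_subset K) hw) hwl⟩
  simpa [weyl] using weyl_mono hempty hmem

/-! ### Signs and Jantzen coefficients -/

lemma isRegularOn_wAct_iff (hw : w ∈ weyl (S.rootsIn K)) :
    IsRegularOn (S.rootsIn K) (wAct w l) ↔ IsRegularOn (S.rootsIn K) l := by
  constructor <;> intro h α hα
  · simpa [wAct_apply] using h (w α) (weyl_mapsTo_rootsIn hw hα)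
  · exact h (w⁻¹ α) (weyl_mapsTo_rootsIn (inv_mem hw) hα)

lemma sgnW_wAct_self (hl : IsRegularOn (S.rootsIn K) l) (hw : w ∈ weyl (S.rootsIn K)) :
    sgnW S (S.rootsIn K) l (wAct w l) = (-1) ^ len S w := by
  have unique (u : V ≃ₗ[ℝ] V) (hu : u ∈ weyl (S.rootsIn K)) (h : wAct w l = wAct u l) : u = w :=
    inv_mul_eq_one.1 <| eq_one_of_wAct_eq hl (mul_mem (inv_mem hu) hw) <| by
      rw [wAct_mul, h, ← wAct_mul, inv_mul_cancel, wAct_one]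
  have hex : ∃ u, u ∈ weyl (S.rootsIn K) ∧ wAct w l = wAct u l := ⟨w, hw, rfl⟩
  rw [sgnW, dif_pos ⟨hl, (isRegularOn_wAct_iff hw).2 hl, hex⟩]
  exact congrArg (fun u ↦ (-1) ^ len S u) (unique _ hex.choose_spec.1 hex.choose_spec.2)

lemma sgnW_ne_zero_iff :
    sgnW S (S.rootsIn K) l m ≠ 0 ↔
      IsRegularOn (S.rootsIn K) l ∧ ∃ w ∈ weyl (S.rootsIn K), m = wAct w l := by
  constructor
  · intro h
    by_contra hcon
    exact h (dif_neg fun h ↦ hcon ⟨h.1, h.2.2⟩)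
  · rintro ⟨hl, w, hw, rfl⟩
    rw [sgnW_wAct_self hl hw]
    exact pow_ne_zero _ (by decide)

lemma sgnW_wAct_right (hw : w ∈ weyl (S.rootsIn K)) :
    sgnW S (S.rootsIn K) l (wAct w m) = (-1) ^ len S w * sgnW S (S.rootsIn K) l m := by
  by_cases h : sgnW S (S.rootsIn K) l m = 0
  · rw [h, mul_zero]
    by_contra hne
    obtain ⟨hl, u, hu, hum⟩ := sgnW_ne_zero_iff.1 hne
    refine sgnW_ne_zero_iff.2 ⟨hl, w⁻¹ * u, mul_mem (inv_mem hw) hu, ?_⟩ h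
    rw [wAct_mul, ← hum, ← wAct_mul, inv_mul_cancel, wAct_one]
  · obtain ⟨hl, u, hu, rfl⟩ := sgnW_ne_zero_iff.1 h
    have hle := weyl_mono (S.rootsIn_subset K)
    rw [← wAct_mul, sgnW_wAct_self hl (mul_mem hw hu), sgnW_wAct_self hl hu,
      neg_one_pow_len_mul (hle hw) (hle hu)]

lemma jc_eq_finsum_psiP (A B : Set V) (l m : HStar V) :
    jc S A B l m = ∑ᶠ β ∈ PsiP S A B l, sgnW S A (sRefl β l) m := by
  refine finsum_mem_inter_support_eq _ _ _ (Set.ext fun β ↦ ?_)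
  refine ⟨fun ⟨hβ, hs⟩ ↦ ⟨hβ.1, hs⟩, fun ⟨hβ, hs⟩ ↦ ⟨⟨hβ, ?_⟩, hs⟩⟩
  by_contra hreg
  exact hs (dif_neg fun h ↦ hreg h.1)

lemma jc_wAct_right {A : Set V} (hw : w ∈ weyl (S.rootsIn K)) :
    jc S (S.rootsIn K) A l (wAct w m) = (-1) ^ len S w * jc S (S.rootsIn K) A l m := by
  have hfin : (PsiPP S (S.rootsIn K) A l).Finite :=
    S.pos.finite_toSet.subset fun _ hβ ↦ hβ.1.1.2
  rw [jc, jc, ← smul_eq_mul, smul_finsum_mem hfin]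
  exact finsum_mem_congr rfl fun β _ ↦ sgnW_wAct_right hw

end RootSys

/-! ### Integral and rational spans of roots -/

lemma mem_span_of_mem_span_tower {F L M ι : Type*} [Field F] [Field L] [Algebra F L]
    [AddCommGroup M] [Module F M] [Module L M] [IsScalarTower F L M] (b : Module.Basis ι L M)
    {A : Set M} (hA : A ⊆ Submodule.span F (Set.range b)) {x : M}
    (hx : x ∈ Submodule.span F (Set.range b)) (hxA : x ∈ Submodule.span L A) :
    x ∈ Submodule.span F A := by
  obtain ⟨f, hf⟩ := LinearMap.exists_leftInverse_of_injective (Algebra.linearMap F L)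
    (LinearMap.ker_eq_bot.2 (algebraMap F L).injective)
  have f_one : f 1 = 1 := by simpa using LinearMap.congr_fun hf 1
  -- `f` retracts `L` onto `F`; applying it to coordinates retracts `M` onto `span F (range b)`.
  let retr : M →ₗ[F] M := Finsupp.linearCombination F b ∘ₗ Finsupp.mapRange.linearMap f ∘ₗ
    b.repr.toLinearMap.restrictScalars F
  have retr_smul (c : L) {a : M} (ha : a ∈ Submodule.span F (Set.range b)) :
      retr (c • a) = f c • a := by
    induction ha using Submodule.span_induction with
    | mem a ha => obtain ⟨i, rfl⟩ := ha; simp [retr]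
    | zero => simp
    | add a a' _ _ h h' => rw [smul_add, map_add, h, h', smul_add]
    | smul r a _ h => rw [smul_comm, map_smul, h, smul_comm]
  have retr_mem : retr x ∈ Submodule.span F A := by
    clear hx
    induction hxA using Submodule.closure_induction with
    | zero => simp
    | add y z _ _ hy hz => rw [map_add]; exact add_mem hy hz
    | smul_mem c a ha =>
      rw [retr_smul c (hA ha)]
      exact Submodule.smul_mem _ _ (Submodule.subset_span ha)
  have h := retr_smul 1 hx
  rw [one_smul, f_one, one_smul] at h
  exact h ▸ retr_mem

namespace RootSys

variable {S : RootSys V}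

lemma PhiI_eq_rootsIn {I : Finset V} (hI : I ⊆ S.Δ) :
    PhiI S I = S.rootsIn (Submodule.span ℝ I) := by
  refine Set.Subset.antisymm (fun α hα ↦ ⟨hα.1, Submodule.span_subset_span ℤ ℝ _ hα.2⟩)
    (rootsIn_span_subset (by exact_mod_cast hI)
      (fun a ha ↦ ⟨mem_roots_of_simple (hI ha), Submodule.subset_span ha⟩) ?_)
  intro α hα β hβ
  obtain ⟨n, hn⟩ := S.crystallographic α hα.1 β hβ.1
  refine ⟨S.refl_mem α hα.1 β hβ.1, ?_⟩
  rw [reflV_apply, hn, Int.cast_smul_eq_zsmul]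
  exact sub_mem hβ.2 (Submodule.smul_mem _ n hα.2)

variable (S) in
lemma roots_subset_span_int_simple :
    (S.Φ : Set V) ⊆ Submodule.span ℤ (S.Δ : Set V) := by
  rw [← S.rootsIn_top, ← S.span_simple, ← PhiI_eq_rootsIn subset_rfl]
  exact fun α hα ↦ hα.2

lemma ratSpanRoots_eq_rootsIn {A : Set V} (hA : A ⊆ (S.Φ : Set V)) :
    ratSpanRoots S A = S.rootsIn (Submodule.span ℝ A) := by
  let _ : Module ℚ V := Module.compHom V (algebraMap ℚ ℝ)
  have : IsScalarTower ℚ ℝ V := .of_algebraMap_smul fun _ _ ↦ rfl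
  have hrat : (S.Φ : Set V) ⊆ Submodule.span ℚ (Set.range S.simpleBasis) := fun α hα ↦ by
    simpa [funext simpleBasis_apply] using
      Submodule.span_subset_span ℤ ℚ _ (S.roots_subset_span_int_simple hα)
  ext γ
  constructor
  · rintro ⟨hγ, t, c, ht, rfl⟩
    exact ⟨hγ, Submodule.sum_smul_mem _ _ fun α hα ↦ Submodule.subset_span (ht hα)⟩
  · rintro ⟨hγ, hγA⟩
    obtain ⟨c, t, ht, -, hsum⟩ := Submodule.mem_span_iff_exists_finset_subset.1
      (mem_span_of_mem_span_tower S.simpleBasis (hA.trans hrat) (hrat hγ) hγA)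
    exact ⟨hγ, t, c, ht, hsum.symm⟩

end RootSys
/-! ### Restriction of weights -/

section Restriction

variable {A : Set V}

lemma emb_mem_span {E : Type*} [NormedAddCommGroup E] [InnerProductSpace ℝ E] {A : Set E} {x : E}
    (hx : x ∈ Submodule.span ℝ A) : emb x ∈ Submodule.span ℂ (emb '' A) := by
  let embL : E →ₗ[ℝ] HStar E :=
    { toFun := emb
      map_add' := fun x y ↦ by ext v; simp [emb, inner_add_left]
      map_smul' := fun c x ↦ by ext v; simp [emb, inner_smul_left] }
  have hle : Submodule.span ℝ A ≤ ((Submodule.span ℂ (emb '' A)).restrictScalars ℝ).comap embL :=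
    Submodule.span_le.2 fun a ha ↦ Submodule.subset_span (Set.mem_image_of_mem emb ha)
  exact hle hx

lemma comp_starProjection_mem_span (A : Set V) (l : HStar V) :
    l ∘ₗ (Submodule.span ℝ A).starProjection.toLinearMap ∈ Submodule.span ℂ (emb '' A) := by
  let b := stdOrthonormalBasis ℝ (Submodule.span ℝ A)
  have hsum : l ∘ₗ (Submodule.span ℝ A).starProjection.toLinearMap =
      ∑ i, l (b i) • emb (b i : V) := by
    ext v
    simp [b.starProjection_eq_sum_rankOne, emb, mul_comm]
  exact hsum ▸ Submodule.sum_smul_mem _ _ fun i _ ↦ emb_mem_span (b i).2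

lemma restrictW_spec (A : Set V) (l : HStar V) :
    restrictW A l ∈ Submodule.span ℂ (emb '' A) ∧
      ∀ α ∈ A, restrictW A l (coroot α) = l (coroot α) := by
  refine Classical.epsilon_spec (p := fun m ↦ m ∈ Submodule.span ℂ (emb '' A) ∧
    ∀ α ∈ A, m (coroot α) = l (coroot α)) ⟨_, comp_starProjection_mem_span A l, fun α hα ↦ ?_⟩
  have hcoroot : coroot α ∈ Submodule.span ℝ A :=
    Submodule.smul_mem _ _ (Submodule.subset_span hα)
  exact congrArg l (Submodule.starProjection_eq_self_iff.2 hcoroot)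

lemma eqOn_restrictW (A : Set V) (l : HStar V) :
    Set.EqOn (restrictW A l) l (Submodule.span ℝ A) := by
  refine LinearMap.eqOn_span fun α hα ↦ ?_
  obtain rfl | hne := eq_or_ne α 0
  · simp
  · have h := (restrictW_spec A l).2 α hα
    rwa [← sub_eq_zero, ← LinearMap.sub_apply, apply_coroot_eq_zero_iff hne, LinearMap.sub_apply,
      sub_eq_zero] at h

lemma wAct_mem_span {w : V ≃ₗ[ℝ] V} (hw : w ∈ weyl A) {l : HStar V}
    (hl : l ∈ Submodule.span ℂ (emb '' A)) : wAct w l ∈ Submodule.span ℂ (emb '' A) := by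
  induction hw using weyl_induction generalizing l with
  | one => exact hl
  | mul_reflV u _ α hα ih =>
    rw [wAct_mul, ← sRefl_eq_wAct]
    exact ih (sub_mem hl (Submodule.smul_mem _ _ (Submodule.subset_span ⟨α, hα, rfl⟩)))

end Restriction

namespace RootSys

variable {S : RootSys V} {K U : Submodule ℝ V} {l l' : HStar V} {w a b : V ≃ₗ[ℝ] V} {β γ : V}

lemma eqOn_wAct (hl : Set.EqOn l' l U) (hw : w ∈ weyl (S.rootsIn U)) :
    Set.EqOn (wAct w l') (wAct w l) U :=
  fun _ hx ↦ hl (weyl_apply_mem (S.rootsIn_subset_coe U) (inv_mem hw) hx)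

lemma weyl_apply_of_mem_orthogonal (hw : w ∈ weyl (S.rootsIn U)) {x : V} (hx : x ∈ Uᗮ) :
    w x = x :=
  eq_self_of_sub_mem (inner_weyl hw) hx (weyl_apply_sub_mem (S.rootsIn_subset_coe U) hw x)

lemma wAct_eq_wAct_iff_eqOn (ha : a ∈ weyl (S.rootsIn U)) (hb : b ∈ weyl (S.rootsIn U)) :
    wAct a l = wAct b l ↔ Set.EqOn (wAct a l) (wAct b l) U := by
  refine ⟨fun h ↦ h ▸ Set.eqOn_refl _ _, fun h ↦ LinearMap.ext fun v ↦ ?_⟩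
  obtain ⟨x, hx, y, hy, rfl⟩ := U.exists_add_mem_mem_orthogonal v
  rw [map_add, map_add, h hx]
  simp only [wAct_apply, weyl_apply_of_mem_orthogonal (inv_mem ha) hy,
    weyl_apply_of_mem_orthogonal (inv_mem hb) hy]

lemma wAct_eq_wAct_iff_of_eqOn (hl : Set.EqOn l' l U) (ha : a ∈ weyl (S.rootsIn U))
    (hb : b ∈ weyl (S.rootsIn U)) : wAct a l' = wAct b l' ↔ wAct a l = wAct b l := by
  have hla := eqOn_wAct hl ha
  have hlb := eqOn_wAct hl hb
  rw [wAct_eq_wAct_iff_eqOn ha hb, wAct_eq_wAct_iff_eqOn ha hb]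
  exact ⟨fun h ↦ (hla.symm.trans h).trans hlb, fun h ↦ (hla.trans h).trans hlb.symm⟩

lemma eqOn_sRefl (hl : Set.EqOn l' l U) (hβ : β ∈ S.rootsIn U) :
    Set.EqOn (sRefl β l') (sRefl β l) U := by
  simpa only [sRefl_eq_wAct] using eqOn_wAct hl (reflV_mem_weyl hβ)

lemma rootsIn_ker_sRefl_subset (hβ : β ∈ S.rootsIn U)
    (hl : S.rootsIn (LinearMap.ker l) ⊆ S.rootsIn U) :
    S.rootsIn (LinearMap.ker (sRefl β l)) ⊆ S.rootsIn U := fun α hα ↦ by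
  have hrefl : reflV β α ∈ S.rootsIn U :=
    hl ⟨S.refl_mem β hβ.1 α hα.1, by simpa [sRefl_apply] using hα.2⟩
  simpa only [reflV_reflV] using reflV_mem_rootsIn hβ hrefl

lemma isRegularOn_rootsIn_inf_iff (hl : Set.EqOn l' l U)
    (hsing : S.rootsIn (LinearMap.ker l) ⊆ S.rootsIn U) :
    IsRegularOn (S.rootsIn (K ⊓ U)) l' ↔ IsRegularOn (S.rootsIn K) l :=
  ⟨fun h α hα h0 ↦ have hαU := (hsing ⟨hα.1, h0⟩).2; h α ⟨hα.1, hα.2, hαU⟩ ((hl hαU).trans h0),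
    fun h α hα h0 ↦ h α ⟨hα.1, hα.2.1⟩ ((hl hα.2.2).symm.trans h0)⟩

/-! ### Comparison of `λ` with its restriction -/

/-- `s_β w s_γ` fixes `λ`, so lies in `W(Φ_λ) ⊆ W(Φ ∩ U)`, and hence so does `w s_γ`. For `x ∈ Uᗮ`
this gives `w s_γ x = x`, so `x - s_γ x` lies in `ℝγ ∩ K = 0`. -/
lemma mem_of_sRefl_eq_wAct_sRefl (hsing : S.rootsIn (LinearMap.ker l) ⊆ S.rootsIn U)
    (hβ : β ∈ S.rootsIn U) (hγ : γ ∈ S.Φ) (hγK : γ ∉ K) (hw : w ∈ weyl (S.rootsIn K))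
    (h : sRefl β l = wAct w (sRefl γ l)) : γ ∈ U ∧ w ∈ weyl (S.rootsIn (K ⊓ U)) := by
  have hwΦ := weyl_mono (S.rootsIn_subset K) hw
  have hstab : reflV β * (w * reflV γ) ∈ weyl (S.rootsIn U) := by
    have hfix : wAct (reflV β * (w * reflV γ)) l = l := by
      rw [wAct_mul, wAct_mul, ← sRefl_eq_wAct γ, ← h, sRefl_eq_wAct, ← wAct_mul, reflV_mul_self,
        wAct_one]
    refine weyl_mono hsing (mem_weyl_ker_of_wAct_eq ?_ hfix)
    exact mul_mem (reflV_mem_weyl hβ.1) (mul_mem hwΦ (reflV_mem_weyl hγ))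
  have hprod : w * reflV γ ∈ weyl (S.rootsIn U) :=
    (Subgroup.mul_mem_cancel_left _ (reflV_mem_weyl hβ)).1 hstab
  have horth (x : V) (hx : x ∈ Uᗮ) : ⟪x, γ⟫ = 0 := by
    have hmem : ⟪x, coroot γ⟫ • γ ∈ K := by
      have h := weyl_apply_sub_mem (S.rootsIn_subset_coe K) hw (reflV γ x)
      rwa [← LinearEquiv.mul_apply, weyl_apply_of_mem_orthogonal hprod hx, reflV_apply,
        sub_sub_cancel] at h
    have hzero : ⟪x, coroot γ⟫ = 0 := by
      by_contra hne
      exact hγK ((K.smul_mem_iff hne).1 hmem)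
    simpa [coroot, inner_smul_right, S.ne_zero γ hγ] using hzero
  have hγU : γ ∈ S.rootsIn U :=
    ⟨hγ, U.orthogonal_orthogonal ▸ (Submodule.mem_orthogonal _ _).2 horth⟩
  refine ⟨hγU.2, (weyl_rootsIn_inf K U).ge ⟨hw, ?_⟩⟩
  exact (Subgroup.mul_mem_cancel_right _ (reflV_mem_weyl hγU)).1 hprod

lemma sRefl_eq_wAct_sRefl_iff_of_eqOn (hl : Set.EqOn l' l U) (hβ : β ∈ S.rootsIn U)
    (hγ : γ ∈ S.rootsIn U) (hw : w ∈ weyl (S.rootsIn U)) :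
    sRefl β l' = wAct w (sRefl γ l') ↔ sRefl β l = wAct w (sRefl γ l) := by
  simp only [sRefl_eq_wAct, ← wAct_mul]
  exact wAct_eq_wAct_iff_of_eqOn hl (reflV_mem_weyl hβ) (mul_mem hw (reflV_mem_weyl hγ))

lemma mem_of_sgnW_sRefl_ne_zero (hsing : S.rootsIn (LinearMap.ker l) ⊆ S.rootsIn U)
    (hβ : β ∈ S.rootsIn U) (hγ : γ ∈ S.Φ) (hγK : γ ∉ K)
    (h : sgnW S (S.rootsIn K) (sRefl γ l) (sRefl β l) ≠ 0) : γ ∈ U := by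
  obtain ⟨-, w, hw, h⟩ := sgnW_ne_zero_iff.1 h
  exact (mem_of_sRefl_eq_wAct_sRefl hsing hβ hγ hγK hw h).1

lemma sgnW_sRefl_of_eqOn (hl : Set.EqOn l' l U) (hsing : S.rootsIn (LinearMap.ker l) ⊆ S.rootsIn U)
    (hβ : β ∈ S.rootsIn U) (hγ : γ ∈ S.rootsIn U) (hγK : γ ∉ K) :
    sgnW S (S.rootsIn K) (sRefl γ l) (sRefl β l) =
      sgnW S (S.rootsIn (K ⊓ U)) (sRefl γ l') (sRefl β l') := by
  have hmono := weyl_mono (S.rootsIn_mono (inf_le_left : K ⊓ U ≤ K))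
  have hreg := isRegularOn_rootsIn_inf_iff (K := K) (eqOn_sRefl hl hγ)
    (rootsIn_ker_sRefl_subset hγ hsing)
  have hiff {w : V ≃ₗ[ℝ] V} (hw : w ∈ weyl (S.rootsIn (K ⊓ U))) :=
    sRefl_eq_wAct_sRefl_iff_of_eqOn hl hβ hγ (weyl_mono (S.rootsIn_mono inf_le_right) hw)
  by_cases h0 : sgnW S (S.rootsIn (K ⊓ U)) (sRefl γ l') (sRefl β l') = 0
  · rw [h0]
    by_contra hne
    obtain ⟨hregK, w, hw, h⟩ := sgnW_ne_zero_iff.1 hne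
    have hwU := (mem_of_sRefl_eq_wAct_sRefl hsing hβ hγ.1 hγK hw h).2
    exact sgnW_ne_zero_iff.2 ⟨hreg.2 hregK, w, hwU, (hiff hwU).2 h⟩ h0
  · obtain ⟨hreg', w, hw, h⟩ := sgnW_ne_zero_iff.1 h0
    rw [h, (hiff hw).1 h, sgnW_wAct_self hreg' hw, sgnW_wAct_self (hreg.1 hreg') (hmono hw)]

lemma psiP_inter_of_eqOn (K : Submodule ℝ V) (hl : Set.EqOn l' l U) :
    PsiP S (S.rootsIn K) S.Φ l ∩ U = PsiP S (S.rootsIn (K ⊓ U)) (S.rootsIn U) l' := by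
  ext γ
  have hcoroot (hγ : γ ∈ U) : l' (coroot γ) = l (coroot γ) := hl (U.smul_mem _ hγ)
  constructor
  · rintro ⟨⟨⟨hγ, hpos⟩, hγK, hint⟩, hγU⟩
    exact ⟨⟨⟨hγ, hγU⟩, hpos⟩, fun h ↦ hγK ⟨h.1, h.2.1⟩, (hcoroot hγU).symm ▸ hint⟩
  · rintro ⟨⟨⟨hγ, hγU⟩, hpos⟩, hγK, hint⟩
    exact ⟨⟨⟨hγ, hpos⟩, fun h ↦ hγK ⟨hγ, h.2, hγU⟩, hcoroot hγU ▸ hint⟩, hγU⟩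

theorem jc_sRefl_of_eqOn (hl : Set.EqOn l' l U) (hsing : S.rootsIn (LinearMap.ker l) ⊆ S.rootsIn U)
    (hβ : β ∈ S.rootsIn U) :
    jc S (S.rootsIn K) S.Φ l (sRefl β l) =
      jc S (S.rootsIn (K ⊓ U)) (S.rootsIn U) l' (sRefl β l') := by
  rw [jc_eq_finsum_psiP, jc_eq_finsum_psiP, ← psiP_inter_of_eqOn K hl]
  have hnotMem {γ : V} (hγ : γ ∈ PsiP S (S.rootsIn K) S.Φ l) : γ ∉ K :=
    fun h ↦ hγ.2.1 ⟨hγ.1.1, h⟩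
  calc ∑ᶠ γ ∈ PsiP S (S.rootsIn K) S.Φ l, sgnW S (S.rootsIn K) (sRefl γ l) (sRefl β l)
      = ∑ᶠ γ ∈ PsiP S (S.rootsIn K) S.Φ l ∩ U,
          sgnW S (S.rootsIn K) (sRefl γ l) (sRefl β l) := by
        refine finsum_mem_inter_support_eq _ _ _ (Set.ext fun γ ↦ ?_)
        refine ⟨fun ⟨hγ, hne⟩ ↦ ⟨⟨hγ, ?_⟩, hne⟩, fun ⟨hγ, hne⟩ ↦ ⟨hγ.1, hne⟩⟩
        exact mem_of_sgnW_sRefl_ne_zero hsing hβ hγ.1.1 (hnotMem hγ) hne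
    _ = _ := finsum_mem_congr rfl fun γ hγ ↦
        sgnW_sRefl_of_eqOn hl hsing hβ ⟨hγ.1.1.1, hγ.2⟩ (hnotMem hγ.1)

/-! ### Integral weights and dominant conjugates -/

lemma coroot_reflV (α β : V) : coroot (reflV α β) = coroot β - ⟪α, coroot β⟫ • coroot α := by
  rw [coroot_map (inner_reflV_reflV α), reflV_apply]
  simp only [coroot, inner_smul_left, inner_smul_right, real_inner_comm α β, smul_smul,
    conj_trivial]
  ring_nf

lemma reflV_mem_integralSet {α : V} (hα : α ∈ integralSet S l) :
    Set.MapsTo (reflV α) (integralSet S l) (integralSet S l) := by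
  intro β hβ
  obtain ⟨m, hm⟩ := hα.2
  obtain ⟨n, hn⟩ := hβ.2
  obtain ⟨k, hk⟩ := S.crystallographic β hβ.1 α hα.1
  refine ⟨S.refl_mem α hα.1 β hβ.1, n - k * m, ?_⟩
  simp [coroot_reflV, hm, hn, hk]

lemma integralSet_subset_integralSet_sRefl (hβ : β ∈ integralSet S l) :
    integralSet S l ⊆ integralSet S (sRefl β l) := by
  intro α hα
  refine ⟨hα.1, ?_⟩
  rw [sRefl_apply, ← coroot_map (inner_reflV_reflV β)]
  exact (reflV_mem_integralSet hβ hα).2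

lemma exists_wAct_isPosInt (hint : S.rootsIn K ⊆ integralSet S l)
    (hreg : IsRegularOn (S.rootsIn K) l) :
    ∃ w ∈ weyl (S.rootsIn K), ∀ α ∈ S.rootsIn K ∩ S.pos, IsPosInt (wAct w l (coroot α)) := by
  obtain ⟨w, hw, hdom⟩ := exists_wAct_dominant (S.rootsIn_subset K) l
  refine ⟨w, hw, fun α hα ↦ ?_⟩
  have hw' := inv_mem hw
  have hwα := weyl_mapsTo_rootsIn hw' hα.1
  obtain ⟨n, hn⟩ := (hint hwα).2
  have hcoroot : wAct w l (coroot α) = n := by rw [wAct_apply, ← coroot_map (inner_weyl hw'), hn]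
  refine ⟨n, lt_of_le_of_ne ?_ ?_, hcoroot⟩
  · have h := (re_apply_coroot_nonneg_iff (S.ne_zero α hα.1.1) _).2 (hdom α ⟨hα.1, hα.2⟩)
    simpa [hcoroot] using h
  · rintro rfl
    exact hreg _ hwα ((apply_coroot_eq_zero_iff (S.ne_zero _ hwα.1) l).1 (by simpa using hn))

theorem exists_mem_LambdaP_sgnW_ne_zero_iff {I : Set V} (hI : I ⊆ S.Δ)
    (hint : S.rootsIn (Submodule.span ℝ I) ⊆ integralSet S l) :
    (∃ m ∈ LambdaP I, sgnW S (S.rootsIn (Submodule.span ℝ I)) l m ≠ 0) ↔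
      IsRegularOn (S.rootsIn (Submodule.span ℝ I)) l := by
  refine ⟨fun ⟨m, _, h⟩ ↦ (sgnW_ne_zero_iff.1 h).1, fun hreg ↦ ?_⟩
  obtain ⟨w, hw, hpos⟩ := exists_wAct_isPosInt hint hreg
  refine ⟨wAct w l, fun α hα ↦ ?_, sgnW_ne_zero_iff.2 ⟨hreg, w, hw, rfl⟩⟩
  have hαΔ := hI hα
  exact hpos α ⟨⟨mem_roots_of_simple hαΔ, Submodule.subset_span hα⟩, S.simple_subset hαΔ⟩

theorem exists_mem_LambdaPSub_sgnW_ne_zero_iff {A : Set V} (hA : S.rootsIn K ⊆ A)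
    (hl : l ∈ Submodule.span ℂ (emb '' A)) (hint : S.rootsIn K ⊆ integralSet S l) :
    (∃ m ∈ LambdaPSub S (S.rootsIn K) A, sgnW S (S.rootsIn K) l m ≠ 0) ↔
      IsRegularOn (S.rootsIn K) l := by
  refine ⟨fun ⟨m, _, h⟩ ↦ (sgnW_ne_zero_iff.1 h).1, fun hreg ↦ ?_⟩
  obtain ⟨w, hw, hpos⟩ := exists_wAct_isPosInt hint hreg
  exact ⟨wAct w l, ⟨wAct_mem_span (weyl_mono hA hw) hl, hpos⟩,
    sgnW_ne_zero_iff.2 ⟨hreg, w, hw, rfl⟩⟩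

theorem exists_sgnW_sRefl_ne_zero_iff_of_eqOn {I : Set V} (hI : I ⊆ S.Δ)
    (hIl : I ⊆ integralSet S l) (hβ : β ∈ integralSet S l)
    (hl : Set.EqOn l' l U) (hl' : l' ∈ Submodule.span ℂ (emb '' S.rootsIn U))
    (hsing : S.rootsIn (LinearMap.ker l) ⊆ S.rootsIn U) (hβU : β ∈ S.rootsIn U) :
    (∃ m ∈ LambdaP I, sgnW S (S.rootsIn (Submodule.span ℝ I)) (sRefl β l) m ≠ 0) ↔
      ∃ m ∈ LambdaPSub S (S.rootsIn (Submodule.span ℝ I ⊓ U)) (S.rootsIn U),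
        sgnW S (S.rootsIn (Submodule.span ℝ I ⊓ U)) (sRefl β l') m ≠ 0 := by
  have hagree := eqOn_sRefl hl hβU
  have hint : S.rootsIn (Submodule.span ℝ I) ⊆ integralSet S (sRefl β l) :=
    (rootsIn_span_subset hI hIl fun _ ↦ reflV_mem_integralSet).trans
      (integralSet_subset_integralSet_sRefl hβ)
  have hint' : S.rootsIn (Submodule.span ℝ I ⊓ U) ⊆ integralSet S (sRefl β l') := fun α hα ↦
    ⟨hα.1, (hagree (U.smul_mem _ hα.2.2)).symm ▸ (hint ⟨hα.1, hα.2.1⟩).2⟩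
  have hspan : sRefl β l' ∈ Submodule.span ℂ (emb '' S.rootsIn U) :=
    sRefl_eq_wAct β l' ▸ wAct_mem_span (reflV_mem_weyl hβU) hl'
  rw [exists_mem_LambdaP_sgnW_ne_zero_iff hI hint,
    exists_mem_LambdaPSub_sgnW_ne_zero_iff (S.rootsIn_mono inf_le_right) hspan hint',
    isRegularOn_rootsIn_inf_iff hagree (rootsIn_ker_sRefl_subset hβU hsing)]

end RootSys

theorem statement_8_general {V : Type*} [NormedAddCommGroup V] [InnerProductSpace ℝ V]
    [FiniteDimensional ℝ V]
    (S : RootSys V) (I : Finset V) (hI : I ⊆ S.Δ)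
    (lam : HStar V) (hlam : (I : Set V) ⊆ integralSet S lam)
    (β : V) (hβ : β ∈ integralSet S lam) :
    ((∃ mu ∈ LambdaP (I : Set V), sgnW S (PhiI S I) (sRefl β lam) mu ≠ 0) ↔
      (∃ mu' ∈ LambdaPSub S (PhiI S I ∩ ratSpanRoots S (singSet S lam ∪ {β}))
          (ratSpanRoots S (singSet S lam ∪ {β})),
        sgnW S (PhiI S I ∩ ratSpanRoots S (singSet S lam ∪ {β}))
          (sRefl β (restrictW (ratSpanRoots S (singSet S lam ∪ {β})) lam)) mu' ≠ 0)) ∧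
    (∀ w ∈ weyl (PhiI S I), ∀ w' ∈ weyl (PhiI S I ∩ ratSpanRoots S (singSet S lam ∪ {β})),
      jc S (PhiI S I) (S.Φ : Set V) lam (wAct w (sRefl β lam)) =
        (-1 : ℤ) ^ (len S w + len S w') *
          jc S (PhiI S I ∩ ratSpanRoots S (singSet S lam ∪ {β}))
            (ratSpanRoots S (singSet S lam ∪ {β}))
            (restrictW (ratSpanRoots S (singSet S lam ∪ {β})) lam)
            (wAct w' (sRefl β (restrictW (ratSpanRoots S (singSet S lam ∪ {β})) lam)))) := by
  have hsub : singSet S lam ∪ {β} ⊆ (S.Φ : Set V) :=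
    Set.union_subset (fun α hα ↦ hα.1) (Set.singleton_subset_iff.2 hβ.1)
  have hspan : singSet S lam ∪ {β} ⊆ S.rootsIn (Submodule.span ℝ (singSet S lam ∪ {β})) :=
    fun α hα ↦ ⟨hsub hα, Submodule.subset_span hα⟩
  rw [RootSys.PhiI_eq_rootsIn hI, RootSys.ratSpanRoots_eq_rootsIn hsub, ← RootSys.rootsIn_inf]
  set U := Submodule.span ℝ (singSet S lam ∪ {β})
  have hagree : Set.EqOn (restrictW (S.rootsIn U) lam) lam U :=
    (eqOn_restrictW _ lam).mono (Submodule.span_mono hspan)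
  have hsing : S.rootsIn (LinearMap.ker lam) ⊆ S.rootsIn U := Set.subset_union_left.trans hspan
  have hβU : β ∈ S.rootsIn U := hspan (Or.inr rfl)
  refine ⟨RootSys.exists_sgnW_sRefl_ne_zero_iff_of_eqOn (by exact_mod_cast hI) hlam hβ hagree
    (restrictW_spec _ lam).1 hsing hβU, fun w hw w' hw' ↦ ?_⟩
  have hsign : (-1 : ℤ) ^ len S w = (-1) ^ (len S w + len S w') * (-1) ^ len S w' := by
    rw [pow_add, mul_assoc, ← mul_pow]
    simp
  rw [RootSys.jc_wAct_right hw, RootSys.jc_wAct_right hw',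
    RootSys.jc_sRefl_of_eqOn hagree hsing hβU, hsign, mul_assoc]
/-- Lemma 4.9 (Singular invariance): for `λ ∈ Λ_I⁺`, `β ∈ Ψ_λ⁺` and
`λ' = λ|_{Φ_{β,2}}`, there is `μ ∈ Λ_I⁺` with `sgn(s_β λ, μ) ≠ 0` iff there is
`μ' ∈ Λ⁺(Φ_I ∩ Φ_{β,2}, Φ_{β,2})` with
`sgn(s_β λ', μ', Φ_I ∩ Φ_{β,2}, Φ_{β,2}) ≠ 0`; and if `sgn(s_β λ, μ) ≠ 0` then,
writing `μ = w s_β λ` with `w ∈ W_I` and `μ' = w' s_β λ'` with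
`w' ∈ W(Φ_I ∩ Φ_{β,2})`, one has
`c(λ, μ) = (-1)^{ℓ(w)+ℓ(w')} c(λ', μ', Φ_I ∩ Φ_{β,2}, Φ_{β,2})`. -/
theorem statement_8 {V : Type*} [NormedAddCommGroup V] [InnerProductSpace ℝ V]
    [FiniteDimensional ℝ V]
    (S : RootSys V) (I : Finset V) (hI : I ⊆ S.Δ)
    (lam : HStar V) (hlam : lam ∈ LambdaP (I : Set V))
    (β : V) (hβ : β ∈ PsiP S (PhiI S I) (S.Φ : Set V) lam) :
    ((∃ mu ∈ LambdaP (I : Set V), sgnW S (PhiI S I) (sRefl β lam) mu ≠ 0) ↔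
      (∃ mu' ∈ LambdaPSub S (PhiI S I ∩ ratSpanRoots S (singSet S lam ∪ {β}))
          (ratSpanRoots S (singSet S lam ∪ {β})),
        sgnW S (PhiI S I ∩ ratSpanRoots S (singSet S lam ∪ {β}))
          (sRefl β (restrictW (ratSpanRoots S (singSet S lam ∪ {β})) lam)) mu' ≠ 0)) ∧
    (∀ mu ∈ LambdaP (I : Set V), sgnW S (PhiI S I) (sRefl β lam) mu ≠ 0 →
      ∀ w : V ≃ₗ[ℝ] V, w ∈ weyl (PhiI S I) → mu = wAct w (sRefl β lam) →
      ∀ mu' ∈ LambdaPSub S (PhiI S I ∩ ratSpanRoots S (singSet S lam ∪ {β}))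
          (ratSpanRoots S (singSet S lam ∪ {β})),
      ∀ w' : V ≃ₗ[ℝ] V, w' ∈ weyl (PhiI S I ∩ ratSpanRoots S (singSet S lam ∪ {β})) →
        mu' = wAct w' (sRefl β (restrictW (ratSpanRoots S (singSet S lam ∪ {β})) lam)) →
        jc S (PhiI S I) (S.Φ : Set V) lam mu =
          (-1 : ℤ) ^ (len S w + len S w') *
            jc S (PhiI S I ∩ ratSpanRoots S (singSet S lam ∪ {β}))
              (ratSpanRoots S (singSet S lam ∪ {β}))
              (restrictW (ratSpanRoots S (singSet S lam ∪ {β})) lam) mu') := by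
  obtain ⟨hiff, hjc⟩ := statement_8_general S I hI lam
    (fun α hα ↦ ⟨RootSys.mem_roots_of_simple (hI hα), (hlam α hα).imp fun _ ↦ And.right⟩)
    β ⟨hβ.1.1, hβ.2.2.imp fun _ ↦ And.right⟩
  exact ⟨hiff, by rintro _ - - w hw rfl _ - w' hw' rfl; exact hjc w hw w' hw'⟩

end JantzenGVM
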